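/- arXiv:2108.06642 — 4 statements merged into one kernel-verified Lean document; each statement's English description precedes it below -/
import Mathlib

section
/- Let X and W be subcategories of A such that X is closed under extensions, W is a cogenerator for X, and W is X-injective (W ⊆ X^⊥). If C ∈ X̂, then there exist a short exact sequence 0 → Y_C → X_C →^{φ_C} C → 0 with X_C ∈ X and Y_C ∈ Ŵ, and a short exact sequence 0 → C →^{ψ^C} Y^C → X^C → 0 with X^C ∈ X and Y^C ∈ Ŵ, such that φ_C is an X-precover of C (every morphism X' → C with X' ∈ X factors through φ_C) and ψ^C is a Ŵ-preenvelope of C (every morphism C → Y' with Y' ∈ Ŵ factors through ψ^C). -/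
/-!
The argument is the Auslander–Buchweitz approximation theorem. Both sequences are produced together
by induction on the length of an `X`-resolution of `M`, using two pushouts.

* From `0 → Y → E → M → 0` with `E ∈ X`, `Y ∈ Ŵ`, embed `E` in some `V ∈ W` with cokernel
  `X' ∈ X`. The pushout `P` of `V ← E → M` sits in `0 → M → P → X' → 0` and in
  `0 → Y → V → P → 0`, so `P ∈ Ŵ` (`exists_coresolution`).
* If `0 → K → E → M → 0` begins an `X`-resolution, a sequence `0 → K → Y → X' → 0` with `Y ∈ Ŵ` and
  `X' ∈ X` is available by induction. The pushout `P` of `E ← K → Y` sits in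
  `0 → E → P → X' → 0`, hence lies in `X` by extension closure, and in `0 → Y → P → M → 0`
  (`exists_resolution`).

Dimension shifting gives `Ŵ ⊆ X^⊥` (`rightPerp_of_hat`), and the factorization properties follow
because the obstructions lie in vanishing `Ext¹` groups from `X` to `Ŵ`.
-/

open CategoryTheory CategoryTheory.Limits CategoryTheory.Abelian ZeroObject

universe w v u

namespace FrobeniusPaper

variable {C : Type u} [Category.{v} C] [Abelian C]

/-- `f, g` form a short exact sequence `0 → A → B → D → 0` in the abelian category `C`. -/
def IsSES {A B D : C} (f : A ⟶ B) (g : B ⟶ D) : Prop :=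
  ∃ w : f ≫ g = 0, (ShortComplex.mk f g w).ShortExact

/-- A "subcategory" in the sense of the paper: a full additive subcategory, regarded as the
predicate of membership for its objects, closed under isomorphisms and direct summands. -/
structure IsSubcat (X : C → Prop) : Prop where
  zero : X 0
  iso_closed : ∀ {A B : C}, (A ≅ B) → X A → X B
  biprod_closed : ∀ {A B : C}, X A → X B → X (A ⊞ B)
  summand_closed : ∀ {A M : C} (i : A ⟶ M) (p : M ⟶ A), i ≫ p = 𝟙 A → X M → X A

/-- `Hat X n M` means `M ∈ X̂ₙ`, i.e. there is an exact sequence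
`0 → Xₙ → ⋯ → X₁ → X₀ → M → 0` with all `Xᵢ ∈ X`. -/
def Hat (X : C → Prop) : ℕ → C → Prop
  | 0, M => X M
  | (n + 1), M => ∃ (K E : C) (f : K ⟶ E) (g : E ⟶ M), IsSES f g ∧ X E ∧ Hat X n K

/-- `M ∈ X̂ = ⋃ₙ X̂ₙ`. -/
def HatAll (X : C → Prop) (M : C) : Prop := ∃ n, Hat X n M

/-- `W` is a cogenerator for `X`. -/
def IsCogenerator (W X : C → Prop) : Prop :=
  (∀ M, W M → X M) ∧
    ∀ M, X M → ∃ (W₀ X' : C) (f : M ⟶ W₀) (g : W₀ ⟶ X'), IsSES f g ∧ W W₀ ∧ X X'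

/-- `W` is a generator for `X`. -/
def IsGenerator (W X : C → Prop) : Prop :=
  (∀ M, W M → X M) ∧
    ∀ M, X M → ∃ (X' W₀ : C) (f : X' ⟶ W₀) (g : W₀ ⟶ M), IsSES f g ∧ W W₀ ∧ X X'

/-- `X` is closed under extensions. -/
def ExtClosed (X : C → Prop) : Prop :=
  ∀ ⦃A B D : C⦄ (f : A ⟶ B) (g : B ⟶ D), IsSES f g → X A → X D → X B

/-- `X` is closed under kernels of epimorphisms. -/
def KerEpiClosed (X : C → Prop) : Prop :=
  ∀ ⦃A B D : C⦄ (f : A ⟶ B) (g : B ⟶ D), IsSES f g → X B → X D → X A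

/-- A thick subcategory: closed under direct summands and two-out-of-three for
short exact sequences. -/
def IsThickSub (T : C → Prop) : Prop :=
  IsSubcat T ∧ ∀ ⦃A B D : C⦄ (f : A ⟶ B) (g : B ⟶ D), IsSES f g →
    (T A → T B → T D) ∧ (T A → T D → T B) ∧ (T B → T D → T A)

/-- Membership in `Thick(X)`, the smallest thick subcategory containing `X`. -/
def thickClosure (X : C → Prop) (M : C) : Prop :=
  ∀ T : C → Prop, IsThickSub T → (∀ N, X N → T N) → T M

variable [HasExt.{w} C]

/-- `Y ∈ X^⊥`, i.e. `Extⁱ(M, Y) = 0` for all `i ≥ 1` and `M ∈ X`. -/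
def rightPerp (X : C → Prop) (Y : C) : Prop :=
  ∀ M, X M → ∀ i : ℕ, 1 ≤ i → Subsingleton (Abelian.Ext M Y i)

/-- A left Frobenius pair `(X, W)`. -/
structure LeftFrobenius (X W : C → Prop) : Prop where
  subX : IsSubcat X
  subW : IsSubcat W
  extClosed : ExtClosed X
  kerEpiClosed : KerEpiClosed X
  cogen : IsCogenerator W X
  perp : ∀ M, W M → rightPerp X M

/-- A strong left Frobenius pair `(X, W)`. -/
structure StrongLeftFrobenius (X W : C → Prop) extends LeftFrobenius X W : Prop where
  gen : IsGenerator W X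
  proj : ∀ M N, W M → X N → ∀ i : ℕ, 1 ≤ i → Subsingleton (Abelian.Ext M N i)

/-- A cotorsion pair `(U, V)` on an extension-closed subcategory `B` of `C`. -/
structure CotorsionPairOn (B U V : C → Prop) : Prop where
  subU : ∀ M, U M → B M
  subV : ∀ M, V M → B M
  isoU : ∀ {A B' : C}, (A ≅ B') → U A → U B'
  summandU : ∀ {A M : C} (i : A ⟶ M) (p : M ⟶ A), i ≫ p = 𝟙 A → U M → U A
  isoV : ∀ {A B' : C}, (A ≅ B') → V A → V B'
  summandV : ∀ {A M : C} (i : A ⟶ M) (p : M ⟶ A), i ≫ p = 𝟙 A → V M → V A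
  ext1 : ∀ M N, U M → V N → Subsingleton (Abelian.Ext M N 1)
  res : ∀ M, B M → ∃ (V₀ U₀ : C) (f : V₀ ⟶ U₀) (g : U₀ ⟶ M), IsSES f g ∧ U U₀ ∧ V V₀
  cores : ∀ M, B M → ∃ (V₀ U₀ : C) (f : M ⟶ V₀) (g : V₀ ⟶ U₀), IsSES f g ∧ U U₀ ∧ V V₀

/-- Pushing out a short exact sequence along a morphism out of its left term. -/
lemma isSES_pushout {C : Type u} [Category.{v} C] [Abelian C] {K E M Y : C} {f : K ⟶ E} {g : E ⟶ M}
    (h : IsSES f g) (a : K ⟶ Y) :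
    ∃ q : pushout f a ⟶ M, IsSES (pushout.inr f a) q := by
  obtain ⟨w, hS⟩ := h
  have : Mono f := hS.mono_f
  have : Epi g := hS.epi_g
  obtain ⟨q, hq₁, hq₂⟩ : ∃ q : pushout f a ⟶ M, pushout.inl f a ≫ q = g ∧
      pushout.inr f a ≫ q = 0 :=
    ⟨pushout.desc g 0 (by simp [w]), pushout.inl_desc _ _ _, pushout.inr_desc _ _ _⟩
  have hepi : Epi q := by
    have : Epi (pushout.inl f a ≫ q) := by rwa [hq₁]
    exact epi_of_epi (pushout.inl f a) _
  refine ⟨q, hq₂, ?_⟩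
  refine ShortComplex.ShortExact.mk' (ShortComplex.exact_of_g_is_cokernel _ ?_)
    (inferInstanceAs (Mono (pushout.inr f a))) hepi
  have key : ∀ {Z : C} (z : pushout f a ⟶ Z), pushout.inr f a ≫ z = 0 →
      ∃ d : M ⟶ Z, q ≫ d = z := fun z hz => by
    have hz' : f ≫ pushout.inl f a ≫ z = 0 := by rw [pushout.condition_assoc, hz, comp_zero]
    have hd : g ≫ hS.exact.desc (pushout.inl f a ≫ z) hz' = pushout.inl f a ≫ z :=
      hS.exact.g_desc _ _
    refine ⟨hS.exact.desc (pushout.inl f a ≫ z) hz', pushout.hom_ext ?_ ?_⟩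
    · rw [reassoc_of% hq₁, hd]
    · rw [reassoc_of% hq₂, zero_comp, hz]
  exact CokernelCofork.IsColimit.ofπ _ _ (fun z hz => (key z hz).choose)
    (fun z hz => (key z hz).choose_spec)
    (fun z hz m hm => by rw [← cancel_epi q, (key z hz).choose_spec]; exact hm)

/-- In the pushout of a monomorphism `f` along an epimorphism `g` with kernel `k`, the morphism
parallel to `g` has kernel `k ≫ f`. -/
lemma isSES_pushout_comp {C : Type u} [Category.{v} C] [Abelian C] {Y E M V : C} {k : Y ⟶ E} {g : E ⟶ M}
    (h : IsSES k g) (f : E ⟶ V) [Mono f] : IsSES (k ≫ f) (pushout.inl f g) := by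
  obtain ⟨w, hS⟩ := h
  have : Mono k := hS.mono_f
  have : Epi g := hS.epi_g
  have hw : (k ≫ f) ≫ pushout.inl f g = 0 := by
    rw [Category.assoc, pushout.condition, reassoc_of% w, zero_comp]
  refine ⟨hw, ?_⟩
  refine ShortComplex.ShortExact.mk' (ShortComplex.exact_of_g_is_cokernel _ ?_)
    (inferInstanceAs (Mono (k ≫ f))) (inferInstanceAs (Epi (pushout.inl f g)))
  have key : ∀ {Z : C} (z : V ⟶ Z), (k ≫ f) ≫ z = 0 →
      ∃ d : pushout f g ⟶ Z, pushout.inl f g ≫ d = z := fun z hz =>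
    ⟨pushout.desc z (hS.exact.desc (f ≫ z) (by simpa using hz)) (hS.exact.g_desc _ _).symm,
      pushout.inl_desc _ _ _⟩
  exact CokernelCofork.IsColimit.ofπ _ _ (fun z hz => (key z hz).choose)
    (fun z hz => (key z hz).choose_spec)
    (fun z hz m hm => by
      rw [← cancel_epi (pushout.inl f g), (key z hz).choose_spec]; exact hm)

/-- An approximation `0 → Y → E → M → 0` with `E ∈ X`, `Y ∈ Ŵ` yields an approximation
`0 → M → Y' → E' → 0` with `E' ∈ X`, `Y' ∈ Ŵ`. -/
lemma exists_coresolution {C : Type u} [Category.{v} C] [Abelian C] {X W : C → Prop}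
    (hcog : IsCogenerator W X) {M Y E : C}
    {k : Y ⟶ E} {g : E ⟶ M} (h : IsSES k g) (hE : X E) (hY : HatAll W Y) :
    ∃ (Y' E' : C) (a : M ⟶ Y') (b : Y' ⟶ E'), IsSES a b ∧ X E' ∧ HatAll W Y' := by
  obtain ⟨V, X', f, p, hfp, hV, hX'⟩ := hcog.2 E hE
  have : Mono f := hfp.choose_spec.mono_f
  obtain ⟨q, hq⟩ := isSES_pushout hfp g
  obtain ⟨n, hn⟩ := hY
  exact ⟨_, _, _, q, hq, hX', n + 1, Y, V, _, _, isSES_pushout_comp h f, hV, hn⟩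

lemma exists_resolution {C : Type u} [Category.{v} C] [Abelian C] {X W : C → Prop}
    (hX : IsSubcat X) (hW : IsSubcat W)
    (hXext : ExtClosed X) (hcog : IsCogenerator W X) (n : ℕ) :
    ∀ M : C, Hat X n M →
      ∃ (Y E : C) (k : Y ⟶ E) (g : E ⟶ M), IsSES k g ∧ X E ∧ HatAll W Y := by
  induction n with
  | zero =>
    intro M hM
    refine ⟨0, M, 0, 𝟙 M, ⟨by simp, ?_⟩, hM, 0, hW.zero⟩
    refine ShortComplex.ShortExact.mk' ?_ (inferInstanceAs (Mono (0 : (0 : C) ⟶ M)))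
      (inferInstanceAs (Epi (𝟙 M)))
    exact (ShortComplex.exact_iff_mono _ rfl).2 (inferInstanceAs (Mono (𝟙 M)))
  | succ n ih =>
    rintro M ⟨K, E, f, g, hfg, hE, hK⟩
    obtain ⟨Y₀, E₀, k₀, g₀, h₀, hE₀, hY₀⟩ := ih K hK
    obtain ⟨Y, X', a, b, hab, hX', hY⟩ := exists_coresolution hcog h₀ hE₀ hY₀
    obtain ⟨q, hq⟩ := isSES_pushout hfg a
    obtain ⟨r, hr⟩ := isSES_pushout hab f
    have hP : X (pushout a f) := hXext _ _ hr hE hX'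
    exact ⟨Y, _, _, q, hq, hX.iso_closed (pushoutSymmetry a f) hP, hY⟩

/-- `Ŵ ⊆ X^⊥`, by dimension shifting. -/
lemma rightPerp_of_hat {C : Type u} [Category.{v} C] [Abelian C] [HasExt.{w} C]
    {X W : C → Prop} (hinj : ∀ M, W M → rightPerp X M)
    (n : ℕ) : ∀ Y : C, Hat W n Y → rightPerp X Y := by
  induction n with
  | zero => exact hinj
  | succ n ih =>
    rintro Y ⟨K, E, f, g, ⟨w, hS⟩, hE, hK⟩ M hM i hi
    have h₁ : Subsingleton (Ext M E i) := hinj E hE M hM i hi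
    have h₂ : Subsingleton (Ext M K (i + 1)) := ih K hK M hM (i + 1) (by omega)
    refine subsingleton_of_forall_eq 0 fun x => ?_
    obtain ⟨y, hy⟩ := Ext.covariant_sequence_exact₃ M hS x rfl (h₂.elim _ _)
    rw [← hy, h₁.elim y 0, Ext.zero_comp]

/-- Approximations: if `X` is closed under extensions, `W` is an `X`-injective
cogenerator for `X`, and `C ∈ X̂`, then `C` admits an `X`-precover with kernel in `Ŵ` and a
`Ŵ`-preenvelope with cokernel in `X`. -/
theorem statement2 {C : Type u} [Category.{v} C] [Abelian C]
    [EnoughProjectives C] [EnoughInjectives C] [HasExt.{w} C]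
    (X W : C → Prop) (hX : IsSubcat X) (hW : IsSubcat W)
    (hXext : ExtClosed X) (hcog : IsCogenerator W X)
    (hinj : ∀ M, W M → rightPerp X M)
    (M : C) (hM : HatAll X M) :
    (∃ (Y E : C) (f : Y ⟶ E) (φ : E ⟶ M), IsSES f φ ∧ X E ∧ HatAll W Y ∧
      ∀ (X' : C) (u : X' ⟶ M), X X' → ∃ v : X' ⟶ E, v ≫ φ = u) ∧
    (∃ (Y E : C) (ψ : M ⟶ Y) (g : Y ⟶ E), IsSES ψ g ∧ X E ∧ HatAll W Y ∧
      ∀ (Y' : C) (u : M ⟶ Y'), HatAll W Y' → ∃ v : Y ⟶ Y', ψ ≫ v = u) := by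
  obtain ⟨n, hn⟩ := hM
  obtain ⟨Y, E, k, g, hkg, hE, hY⟩ := exists_resolution hX hW hXext hcog n M hn
  obtain ⟨Y₁, E₁, a, b, hab, hE₁, hY₁⟩ := exists_coresolution hcog hkg hE hY
  refine ⟨⟨Y, E, k, g, hkg, hE, hY, fun X' u hX' => ?_⟩,
    ⟨Y₁, E₁, a, b, hab, hE₁, hY₁, fun Y' u hY' => ?_⟩⟩
  · obtain ⟨m, hm⟩ := hY
    obtain ⟨w, hS⟩ := hkg
    have h₁ : Subsingleton (Ext X' Y (0 + 1)) := rightPerp_of_hat hinj m Y hm X' hX' 1 le_rfl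
    obtain ⟨x, hx⟩ := Ext.covariant_sequence_exact₃ X' hS (Ext.mk₀ u) rfl (h₁.elim _ _)
    obtain ⟨v, rfl⟩ := (Ext.mk₀_bijective _ _).2 x
    rw [Ext.mk₀_comp_mk₀] at hx
    exact ⟨v, (Ext.mk₀_bijective _ _).1 hx⟩
  · obtain ⟨m, hm⟩ := hY'
    obtain ⟨w, hS⟩ := hab
    have h₁ : Subsingleton (Ext E₁ Y' (1 + 0)) := rightPerp_of_hat hinj m Y' hm E₁ hE₁ 1 le_rfl
    obtain ⟨x, hx⟩ := Ext.contravariant_sequence_exact₁ hS Y' (Ext.mk₀ u) rfl (h₁.elim _ _)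
    obtain ⟨v, rfl⟩ := (Ext.mk₀_bijective _ _).2 x
    rw [Ext.mk₀_comp_mk₀] at hx
    exact ⟨v, (Ext.mk₀_bijective _ _).1 hx⟩

end FrobeniusPaper
end

section
/- Let (X, W) be a left Frobenius pair in A and let 0 → K → X → C → 0 be a short exact sequence in A with X ∈ X. Then C ∈ X̂ if and only if K ∈ X̂. -/
/-!
The implication `K ∈ X̂ → M ∈ X̂` prepends `E` to a resolution of `K`. The converse goes through
the Auslander–Buchweitz approximation (`exists_approx`): every `M ∈ X̂` sits in a short exact
sequence `0 → Y → X₀ → M → 0` with `X₀ ∈ X` and `Y ∈ Ŵ`. Let `P` be the pullback of `E → M` and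
`X₀ → M`. It fits into `0 → Y → P → E → 0` and `0 → K → P → X₀ → 0`.

Dimension shifting gives `Ŵ ⊆ X^⊥` (`hat_perp`), so the first sequence splits, and adding `E` to
the first term of a `W`-resolution of `Y` shows that `P ∈ X̂` (`hat_of_ext`). The second sequence
presents `K` as the kernel of an epimorphism from an object of `X̂` to an object of `X`. As `X` is
closed under kernels of epimorphisms, such a kernel lies in `X̂` again (`hat_ker`).
-/

open CategoryTheory CategoryTheory.Limits CategoryTheory.Abelian ZeroObject

universe w v u

namespace FrobeniusPaper

variable {C : Type u} [Category.{v} C] [Abelian C]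

variable [HasExt.{w} C]

section Helpers

variable {𝒜 : Type u} [Category.{v} 𝒜] [Abelian 𝒜]

lemma IsSES.mono {A B D : 𝒜} {f : A ⟶ B} {g : B ⟶ D} (h : IsSES f g) : Mono f := h.2.mono_f

lemma IsSES.epi {A B D : 𝒜} {f : A ⟶ B} {g : B ⟶ D} (h : IsSES f g) : Epi g := h.2.epi_g

lemma IsSES.exists_lift {A B D : 𝒜} {f : A ⟶ B} {g : B ⟶ D} (h : IsSES f g)
    {T : 𝒜} (k : T ⟶ B) (hk : k ≫ g = 0) : ∃ l : T ⟶ A, l ≫ f = k := by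
  obtain ⟨w, h⟩ := h
  have := h.mono_f
  exact ⟨h.exact.lift k hk, h.exact.lift_f k hk⟩

lemma IsSES.exists_desc {A B D : 𝒜} {f : A ⟶ B} {g : B ⟶ D} (h : IsSES f g)
    {T : 𝒜} (k : B ⟶ T) (hk : f ≫ k = 0) : ∃ l : D ⟶ T, g ≫ l = k := by
  obtain ⟨w, h⟩ := h
  have := h.epi_g
  exact ⟨h.exact.desc k hk, h.exact.g_desc k hk⟩

lemma isSES_of_lift {A B D : 𝒜} {f : A ⟶ B} {g : B ⟶ D} (hf : Mono f) (hg : Epi g)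
    (w : f ≫ g = 0) (h : ∀ ⦃T : 𝒜⦄ (k : T ⟶ B), k ≫ g = 0 → ∃ l : T ⟶ A, l ≫ f = k) :
    IsSES f g :=
  ⟨w, { exact := ShortComplex.exact_of_f_is_kernel _
          (KernelFork.IsLimit.ofι' _ _ fun k hk => ⟨(h k hk).choose, (h k hk).choose_spec⟩)
        mono_f := hf
        epi_g := hg }⟩

lemma isSES_of_desc {A B D : 𝒜} {f : A ⟶ B} {g : B ⟶ D} (hf : Mono f) (hg : Epi g)
    (w : f ≫ g = 0) (h : ∀ ⦃T : 𝒜⦄ (k : B ⟶ T), f ≫ k = 0 → ∃ l : D ⟶ T, g ≫ l = k) :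
    IsSES f g :=
  ⟨w, { exact := ShortComplex.exact_of_g_is_cokernel _
          (CokernelCofork.IsColimit.ofπ' _ _ fun k hk => ⟨(h k hk).choose, (h k hk).choose_spec⟩)
        mono_f := hf
        epi_g := hg }⟩

/-- The base change of a short exact sequence along a morphism into its last term. -/
lemma IsSES.of_isPullback {A B D D' P : 𝒜} {f : A ⟶ B} {g : B ⟶ D} (h : IsSES f g)
    {p : P ⟶ D'} {q : P ⟶ B} {d : D' ⟶ D} (sq : IsPullback p q d g) :
    ∃ i : A ⟶ P, i ≫ q = f ∧ IsSES i p := by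
  have hm := h.mono
  have hg := h.epi
  have w : (0 : A ⟶ D') ≫ d = f ≫ g := by rw [h.1, zero_comp]
  refine ⟨sq.lift 0 f w, sq.lift_snd _ _ _, isSES_of_lift ?_ ?_ (sq.lift_fst _ _ _) ?_⟩
  · have : Mono (sq.lift 0 f w ≫ q) := by rw [sq.lift_snd]; exact hm
    exact mono_of_mono _ q
  · exact MorphismProperty.of_isPullback (P := MorphismProperty.epimorphisms 𝒜) sq.flip hg
  · intro T k hk
    obtain ⟨l, hl⟩ := h.exists_lift (k ≫ q) (by
      rw [Category.assoc, ← sq.w, reassoc_of% hk, zero_comp])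
    refine ⟨l, sq.hom_ext ?_ ?_⟩
    · rw [Category.assoc, sq.lift_fst, comp_zero, hk]
    · rw [Category.assoc, sq.lift_snd, hl]

/-- The cobase change of a short exact sequence along a morphism out of its first term. -/
lemma IsSES.of_isPushout {A B D A' P : 𝒜} {f : A ⟶ B} {g : B ⟶ D} (h : IsSES f g)
    {a : A ⟶ A'} {b : B ⟶ P} {i : A' ⟶ P} (sq : IsPushout f a b i) :
    ∃ p : P ⟶ D, b ≫ p = g ∧ IsSES i p := by
  have hm := h.mono
  have hg := h.epi
  have w : f ≫ g = a ≫ (0 : A' ⟶ D) := by rw [h.1, comp_zero]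
  refine ⟨sq.desc g 0 w, sq.inl_desc _ _ _, isSES_of_desc ?_ ?_ (sq.inr_desc _ _ _) ?_⟩
  · exact MorphismProperty.of_isPushout (P := MorphismProperty.monomorphisms 𝒜) sq.flip hm
  · have : Epi (b ≫ sq.desc g 0 w) := by rw [sq.inl_desc]; exact hg
    exact epi_of_epi b _
  · intro T k hk
    obtain ⟨l, hl⟩ := h.exists_desc (b ≫ k) (by
      rw [← Category.assoc, sq.w, Category.assoc, hk, comp_zero])
    refine ⟨l, sq.hom_ext ?_ ?_⟩
    · rw [← Category.assoc, sq.inl_desc, hl]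
    · rw [← Category.assoc, sq.inr_desc, zero_comp, hk]

/-- The preimage of the kernel `A` of `g` under an epimorphism `q` is the kernel of `q ≫ g`. -/
lemma IsSES.of_isPullback_kernel {A B D G L : 𝒜} {f : A ⟶ B} {g : B ⟶ D} (h : IsSES f g)
    {l : L ⟶ G} {p : L ⟶ A} {q : G ⟶ B} (hq : Epi q) (sq : IsPullback l p q f) :
    IsSES l (q ≫ g) := by
  have hm := h.mono
  have hg := h.epi
  refine isSES_of_lift ?_ (epi_comp _ _) ?_ ?_
  · exact MorphismProperty.of_isPullback (P := MorphismProperty.monomorphisms 𝒜) sq.flip hm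
  · rw [← Category.assoc, sq.w, Category.assoc, h.1, comp_zero]
  · intro T k hk
    obtain ⟨t, ht⟩ := h.exists_lift (k ≫ q) (by rw [Category.assoc, hk])
    exact ⟨sq.lift k t ht.symm, sq.lift_fst _ _ _⟩

lemma hat_mono {X W : 𝒜 → Prop} (h : ∀ M, W M → X M) (n : ℕ) (M : 𝒜) (hM : Hat W n M) :
    Hat X n M := by
  induction n generalizing M with
  | zero => exact h M hM
  | succ n ih =>
    obtain ⟨K, E, f, g, hs, hE, hK⟩ := hM
    exact ⟨K, E, f, g, hs, h _ hE, ih _ hK⟩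

/-- `X̂ₙ` contains the kernel of every epimorphism from one of its objects to an object of `X`. -/
lemma hat_ker {X : 𝒜 → Prop} (hX : KerEpiClosed X) (n : ℕ) {K P D : 𝒜} (f : K ⟶ P) (g : P ⟶ D)
    (hs : IsSES f g) (hP : Hat X n P) (hD : X D) : Hat X n K := by
  cases n with
  | zero => exact hX f g hs hP hD
  | succ n =>
    obtain ⟨Q, G, a, q, hq, hG, hQ⟩ := hP
    have sq := IsPullback.of_hasPullback q f
    obtain ⟨i, -, hi⟩ := hq.of_isPullback sq.flip
    exact ⟨Q, _, i, _, hi, hX _ _ (hs.of_isPullback_kernel hq.epi sq) hG hD, hQ⟩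

end Helpers

section Frobenius

variable {𝒜 : Type u} [Category.{v} 𝒜] [Abelian 𝒜] [HasExt.{w} 𝒜] {X W : 𝒜 → Prop}

/-- The Auslander–Buchweitz approximation: every object of `X̂` is a quotient of an object of `X`
by an object of `Ŵ`. -/
lemma exists_approx (hF : LeftFrobenius X W) (n : ℕ) (M : 𝒜) (hM : Hat X n M) :
    ∃ (Y X₀ : 𝒜) (f : Y ⟶ X₀) (g : X₀ ⟶ M), IsSES f g ∧ X X₀ ∧ HatAll W Y := by
  induction n generalizing M with
  | zero =>
    refine ⟨0, M, 0, 𝟙 M, isSES_of_lift inferInstance inferInstance zero_comp ?_, hM,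
      0, hF.subW.zero⟩
    intro T k hk
    exact ⟨0, by rw [zero_comp, ← hk, Category.comp_id]⟩
  | succ n ih =>
    obtain ⟨K, E, f, g, hs, hE, hK⟩ := hM
    obtain ⟨Y, X₀, a, b, hab, hX₀, m, hY⟩ := ih K hK
    obtain ⟨W₀, X', c, d, hcd, hW₀, hX'⟩ := hF.cogen.2 X₀ hX₀
    -- The pushout of `X₀ ⟶ W₀` and `X₀ ⟶ K` is an object `Y' ∈ Ŵ` with `0 → K → Y' → X' → 0`.
    have sq := IsPushout.of_hasPushout c b
    obtain ⟨p, -, hp⟩ := hcd.of_isPushout sq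
    have hY' : IsSES (a ≫ c) (pushout.inl c b) := by
      have hmc := hcd.mono
      have hma := hab.mono
      have hb := hab.epi
      refine isSES_of_desc (mono_comp _ _) ?_ ?_ ?_
      · exact MorphismProperty.of_isPushout (P := MorphismProperty.epimorphisms 𝒜) sq hb
      · rw [Category.assoc, sq.w, ← Category.assoc, hab.1, zero_comp]
      · intro T k hk
        obtain ⟨t, ht⟩ := hab.exists_desc (c ≫ k) (by rw [← Category.assoc, hk])
        exact ⟨sq.desc k t ht.symm, sq.inl_desc _ _ _⟩
    -- The pushout of `K ⟶ E` and `K ⟶ Y'` is an extension of `X'` by `E`, hence lies in `X`.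
    have sq' := IsPushout.of_hasPushout f (pushout.inr c b)
    obtain ⟨p₁, -, hp₁⟩ := hs.of_isPushout sq'
    obtain ⟨p₂, -, hp₂⟩ := hp.of_isPushout sq'.flip
    exact ⟨_, _, _, p₁, hp₁, hF.extClosed _ _ hp₂ hE hX', m + 1, Y, W₀, _, _, hY', hW₀, hY⟩

/-- `Ŵ ⊆ X^⊥`, by dimension shifting. -/
lemma hat_perp (hF : LeftFrobenius X W) (n : ℕ) (Y : 𝒜) (hY : Hat W n Y) : rightPerp X Y := by
  induction n generalizing Y with
  | zero => exact hF.perp Y hY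
  | succ n ih =>
    obtain ⟨K, W₀, f, g, ⟨w, hs⟩, hW₀, hK⟩ := hY
    intro M hM i hi
    have h₁ := hF.perp W₀ hW₀ M hM i hi
    have h₂ := ih K hK M hM (i + 1) (by omega)
    refine subsingleton_of_forall_eq 0 fun x => ?_
    obtain ⟨y, hy⟩ := Ext.covariant_sequence_exact₃ M hs x rfl (Subsingleton.elim _ _)
    rw [← hy, Subsingleton.elim y 0, Ext.zero_comp]

/-- An extension of an object of `X` by an object of `Ŵₙ` lies in `X̂ₙ`. -/
lemma hat_of_ext (hF : LeftFrobenius X W) (n : ℕ) {Y P E : 𝒜} (i : Y ⟶ P) (p : P ⟶ E)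
    (hs : IsSES i p) (hY : Hat W n Y) (hE : X E) : Hat X n P := by
  cases n with
  | zero => exact hF.extClosed i p hs (hF.cogen.1 _ hY) hE
  | succ n =>
    have hsub : Subsingleton (Ext E Y 1) := hat_perp hF _ Y hY E hE 1 le_rfl
    -- The identity of `E` lifts along `p`, because the obstruction lies in `Ext E Y 1 = 0`.
    obtain ⟨s, hsp⟩ : ∃ s : E ⟶ P, s ≫ p = 𝟙 E := by
      obtain ⟨y, hy⟩ := Ext.covariant_sequence_exact₃ E hs.2 (Ext.mk₀ (𝟙 E)) (zero_add 1)
        (Subsingleton.elim _ _)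
      obtain ⟨s, rfl⟩ := (Ext.mk₀_bijective _ _).2 y
      rw [Ext.mk₀_comp_mk₀] at hy
      exact ⟨s, (Ext.mk₀_bijective _ _).1 hy⟩
    obtain ⟨K, G, a, q, hq, hG, hK⟩ := hY
    have hma := hq.mono
    have heq := hq.epi
    have hmi := hs.mono
    have hip := hs.1
    have haq := hq.1
    refine ⟨K, G ⊞ E, a ≫ biprod.inl, biprod.desc (q ≫ i) s,
      isSES_of_lift (mono_comp _ _) ?_ ?_ ?_, hF.subX.biprod_closed (hF.cogen.1 _ hG) hE,
      hat_mono hF.cogen.1 n K hK⟩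
    · refine Preadditive.epi_of_cancel_zero _ fun {T} h hh => ?_
      have h₁ : q ≫ i ≫ h = 0 := by
        rw [← Category.assoc, ← biprod.inl_desc (q ≫ i) s, Category.assoc, hh, comp_zero]
      have h₂ : s ≫ h = 0 := by
        rw [← biprod.inr_desc (q ≫ i) s, Category.assoc, hh, comp_zero]
      have h₃ : i ≫ h = 0 := by rwa [← cancel_epi q, comp_zero]
      obtain ⟨t, rfl⟩ := hs.exists_desc h h₃
      rw [reassoc_of% hsp] at h₂
      rw [h₂, comp_zero]
    · rw [Category.assoc, biprod.inl_desc, reassoc_of% haq, zero_comp]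
    · intro T k hk
      rw [biprod.desc_eq, Preadditive.comp_add] at hk
      have h₁ : k ≫ biprod.snd = 0 := by
        have := congrArg (· ≫ p) hk
        simpa [hip, hsp] using this
      have h₂ : (k ≫ biprod.fst) ≫ q = 0 := by
        rw [← cancel_mono i, zero_comp]
        simpa [reassoc_of% h₁] using hk
      obtain ⟨l, hl⟩ := hq.exists_lift _ h₂
      refine ⟨l, biprod.hom_ext _ _ ?_ ?_⟩
      · simpa using hl
      · simp [h₁]

end Frobenius

/-- If `(X, W)` is a left Frobenius pair and `0 → K → E → M → 0` is a short
exact sequence with `E ∈ X`, then `M ∈ X̂` iff `K ∈ X̂`. -/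
theorem statement3 {C : Type u} [Category.{v} C] [Abelian C]
    [EnoughProjectives C] [EnoughInjectives C] [HasExt.{w} C]
    (X W : C → Prop) (hF : LeftFrobenius X W)
    {K E M : C} (f : K ⟶ E) (g : E ⟶ M) (hses : IsSES f g) (hE : X E) :
    HatAll X M ↔ HatAll X K := by
  constructor
  · rintro ⟨n, hM⟩
    obtain ⟨Y, X₀, a, b, hab, hX₀, m, hY⟩ := exists_approx hF n M hM
    have sq := IsPullback.of_hasPullback g b
    obtain ⟨i, -, hi⟩ := hab.of_isPullback sq
    obtain ⟨j, -, hj⟩ := hses.of_isPullback sq.flip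
    exact ⟨m, hat_ker hF.kerEpiClosed m _ _ hj (hat_of_ext hF m _ _ hi hY hE) hX₀⟩
  · rintro ⟨n, hK⟩
    exact ⟨n + 1, K, E, f, g, hses, hE, hK⟩

end FrobeniusPaper
end

section
/- Let (X, W) be a left Frobenius pair in A. Then X̂ is a thick subcategory of A, and indeed Thick(X) = X̂; that is, X̂ is closed under direct summands, and for every short exact sequence 0 → A' → B → C → 0 in A, if two of A', B, C lie in X̂ then so does the third, and X̂ is the smallest such subcategory containing X. -/
/-!
For a left Frobenius pair `(X, W)`, write `X̂ₙ` for the objects with an `X`-resolution of length `n`.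

* Each `X̂ₙ` is closed under kernels of epimorphisms onto objects of `X`, because `X` is closed
  under kernels of epimorphisms (`Hat.ker`).
* By induction on `n`, every `A ∈ X̂ₙ` has a hull `0 → A → H → X' → 0` with `H ∈ X̂ₙ ∩ X^⊥` and
  `X' ∈ X` (`LeftFrobenius.exists_hull`). This is where the cogenerator `W ⊆ X^⊥` enters.
* If `0 → A → B → D → 0` has `A ∈ X̂ₙ` and `D ∈ X`, its pushout along `A → H` splits since
  `Ext¹(D, H) = 0`. Hence `B` is the kernel of an epimorphism from `H ⊞ D ∈ X̂ₙ` onto `X' ∈ X`, so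
  `B ∈ X̂ₙ` (`LeftFrobenius.hat_ext`).

The remaining closure properties are consequences of these facts. Closure of `X̂` under extensions
is an induction on the length of a resolution of the quotient `D`, and cokernels of monomorphisms
and kernels of epimorphisms reduce to extensions by pulling back. For a direct summand `A` of
`M ∈ X̂ₙ₊₁`, with `0 → K → E → M → 0` starting a resolution, the kernel of `E → A` is a direct
summand of the kernel `L` of a suitable epimorphism `E ⊞ E → M`. The pullback of this epimorphism
and `E → M` is an extension of `E ⊞ E` by `K`, so it lies in `X̂ₙ`, and so does the kernel `L` of its
projection onto `E`; induction on `n` then applies. Finally a thick subcategory containing `X`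
contains `X̂` by induction on the length of a resolution.
-/

open CategoryTheory CategoryTheory.Limits CategoryTheory.Abelian ZeroObject

universe w v u

namespace FrobeniusPaper

variable {C : Type u} [Category.{v} C] [Abelian C]

variable [HasExt.{w} C]

/-! ### Short exact sequences -/

lemma isSES_mk {C : Type u} [Category.{v} C] [Abelian C] {A B D : C} {f : A ⟶ B} {g : B ⟶ D}
    (w : f ≫ g = 0) [Mono f] [Epi g]
    (h : ∀ {T : C} (k : T ⟶ B), k ≫ g = 0 → ∃ l, l ≫ f = k) : IsSES f g := by
  refine ⟨w, ShortComplex.ShortExact.mk' (ShortComplex.exact_of_f_is_kernel _ ?_) ‹_› ‹_›⟩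
  exact KernelFork.IsLimit.ofι' _ _ (fun k hk => ⟨(h k hk).choose, (h k hk).choose_spec⟩)

namespace IsSES

section

variable {C : Type u} [Category.{v} C] [Abelian C] {A B D : C} {f : A ⟶ B} {g : B ⟶ D}

lemma comp_eq_zero (h : IsSES f g) : f ≫ g = 0 := h.1

lemma mono_s5 (h : IsSES f g) : Mono f := h.2.mono_f

lemma epi_s5 (h : IsSES f g) : Epi g := h.2.epi_g

lemma exists_lift_s5 (h : IsSES f g) {T : C} (k : T ⟶ B) (hk : k ≫ g = 0) : ∃ l, l ≫ f = k := by
  have := h.mono_s5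
  exact ⟨h.2.exact.lift k hk, h.2.exact.lift_f k hk⟩

lemma op (h : IsSES f g) : IsSES g.op f.op := ⟨_, h.2.op⟩

end

lemma unop {C : Type u} [Category.{v} C] [Abelian C] {A B D : Cᵒᵖ} {f : A ⟶ B} {g : B ⟶ D}
    (h : IsSES f g) : IsSES g.unop f.unop := ⟨_, h.2.unop⟩

variable {C : Type u} [Category.{v} C] [Abelian C]

lemma pullback_snd {K E D B : C} {f : K ⟶ E} {g : E ⟶ D} (h : IsSES f g) (b : B ⟶ D) :
    IsSES (pullback.lift f 0 (by simp [h.comp_eq_zero]) : K ⟶ pullback g b)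
      (pullback.snd g b) := by
  have := h.mono_s5
  have := h.epi_s5
  have : Mono (pullback.lift f 0 (by simp [h.comp_eq_zero]) : K ⟶ pullback g b) :=
    mono_of_mono_fac (pullback.lift_fst _ _ _)
  refine isSES_mk (pullback.lift_snd _ _ _) fun k hk => ?_
  obtain ⟨l, hl⟩ := h.exists_lift_s5 (k ≫ pullback.fst g b)
    (by rw [Category.assoc, pullback.condition, reassoc_of% hk, zero_comp])
  refine ⟨l, pullback.hom_ext ?_ ?_⟩
  · rw [Category.assoc, pullback.lift_fst, hl]
  · rw [Category.assoc, pullback.lift_snd, hk, comp_zero]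

lemma pullback_fst {K E D B : C} {g : E ⟶ D} {f : K ⟶ B} {b : B ⟶ D} (h : IsSES f b) :
    IsSES (pullback.lift 0 f (by simp [h.comp_eq_zero]) : K ⟶ pullback g b)
      (pullback.fst g b) := by
  have := h.mono_s5
  have := h.epi_s5
  have : Mono (pullback.lift 0 f (by simp [h.comp_eq_zero]) : K ⟶ pullback g b) :=
    mono_of_mono_fac (pullback.lift_snd _ _ _)
  refine isSES_mk (pullback.lift_fst _ _ _) fun k hk => ?_
  obtain ⟨l, hl⟩ := h.exists_lift_s5 (k ≫ pullback.snd g b)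
    (by rw [Category.assoc, ← pullback.condition, reassoc_of% hk, zero_comp])
  refine ⟨l, pullback.hom_ext ?_ ?_⟩
  · rw [Category.assoc, pullback.lift_fst, hk, comp_zero]
  · rw [Category.assoc, pullback.lift_snd, hl]

/-- The two short exact sequences through the pullback of two epimorphisms onto `D`. -/
lemma exists_pullback {K E D J B : C} {f : K ⟶ E} {g : E ⟶ D} {j : J ⟶ B} {b : B ⟶ D}
    (h : IsSES f g) (h' : IsSES j b) :
    ∃ (P : C) (k : K ⟶ P) (q : P ⟶ B) (l : J ⟶ P) (p : P ⟶ E), IsSES k q ∧ IsSES l p :=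
  ⟨_, _, _, _, _, h.pullback_snd b, h'.pullback_fst⟩

/-- The two short exact sequences through the pushout of two monomorphisms out of `A`. -/
lemma exists_pushout {A E D B J : C} {f : A ⟶ E} {g : E ⟶ D} {b : A ⟶ B} {j : B ⟶ J}
    (h : IsSES f g) (h' : IsSES b j) :
    ∃ (P : C) (k : B ⟶ P) (q : P ⟶ D) (l : E ⟶ P) (p : P ⟶ J), IsSES k q ∧ IsSES l p := by
  obtain ⟨P, k, q, l, p, h₁, h₂⟩ := h.op.exists_pullback h'.op
  exact ⟨P.unop, q.unop, k.unop, p.unop, l.unop, h₁.unop, h₂.unop⟩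

/-- For composable epimorphisms `E ⟶ B ⟶ D`, the kernel `P` of the composite is an extension of
the kernel of `B ⟶ D` by the kernel of `E ⟶ B`. -/
lemma exists_ker_comp {K E B A D : C} {f : K ⟶ E} {g : E ⟶ B} {i : A ⟶ B} {d : B ⟶ D}
    (h : IsSES f g) (h' : IsSES i d) :
    ∃ (P : C) (k : K ⟶ P) (q : P ⟶ A) (l : P ⟶ E) (p : E ⟶ D), IsSES k q ∧ IsSES l p := by
  have := h.epi_s5
  have := h'.epi_s5
  have := h'.mono_s5
  refine ⟨_, _, _, pullback.fst g i, g ≫ d, h.pullback_snd i, isSES_mk ?_ fun k hk => ?_⟩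
  · rw [pullback.condition_assoc, h'.comp_eq_zero, comp_zero]
  · obtain ⟨l, hl⟩ := h'.exists_lift_s5 (k ≫ g) (by simpa using hk)
    exact ⟨pullback.lift k l hl.symm, pullback.lift_fst _ _ _⟩

/-- For composable monomorphisms `A ⟶ B ⟶ E`, the cokernel `P` of the composite is an extension
of the cokernel of `B ⟶ E` by the cokernel of `A ⟶ B`. -/
lemma exists_coker_comp {A B E D J : C} {i : A ⟶ B} {d : B ⟶ D} {f : B ⟶ E} {g : E ⟶ J}
    (h : IsSES f g) (h' : IsSES i d) :
    ∃ (P : C) (k : A ⟶ E) (q : E ⟶ P) (l : D ⟶ P) (p : P ⟶ J), IsSES k q ∧ IsSES l p := by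
  obtain ⟨P, k, q, l, p, h₁, h₂⟩ := h.op.exists_ker_comp h'.op
  exact ⟨P.unop, p.unop, l.unop, q.unop, k.unop, h₂.unop, h₁.unop⟩

/-- A short exact sequence with vanishing `Ext¹` splits. -/
lemma nonempty_iso_biprod [HasExt.{w} C] {A B D : C} {f : A ⟶ B} {g : B ⟶ D} (h : IsSES f g)
    (hE : Subsingleton (Abelian.Ext D A 1)) : Nonempty (A ⊞ D ≅ B) := by
  obtain ⟨w, hS⟩ := h
  obtain ⟨x, hx⟩ := Abelian.Ext.covariant_sequence_exact₃ D hS (Abelian.Ext.mk₀ (𝟙 D))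
    (zero_add 1) (Subsingleton.elim _ _)
  obtain ⟨s, rfl⟩ := Abelian.Ext.addEquiv₀.symm.surjective x
  have hs : s ≫ g = 𝟙 D := by
    apply Abelian.Ext.addEquiv₀.symm.injective
    simpa using hx
  exact ⟨(ShortComplex.Splitting.ofExactOfSection _ hS.exact s hs
    hS.mono_f).isoBinaryBiproduct.symm⟩

/-- `X^⊥` is closed under cokernels of monomorphisms. -/
lemma rightPerp_coker [HasExt.{w} C] {X : C → Prop} {A B D : C} {f : A ⟶ B} {g : B ⟶ D}
    (h : IsSES f g) (hA : rightPerp X A) (hB : rightPerp X B) : rightPerp X D := by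
  intro M hM i hi
  have := hA M hM (i + 1) (by lia)
  have := hB M hM i hi
  refine subsingleton_of_forall_eq 0 fun x => ?_
  obtain ⟨y, rfl⟩ := Abelian.Ext.covariant_sequence_exact₃ M h.2 x rfl (Subsingleton.elim _ _)
  rw [Subsingleton.elim y 0, Abelian.Ext.zero_comp]

end IsSES

/-! ### Closure properties of the classes `X̂ₙ` -/

section

variable {C : Type u} [Category.{v} C] [Abelian C] {X : C → Prop}

lemma Hat.of_iso (hX : IsSubcat X) {n : ℕ} {A B : C} (e : A ≅ B) (h : Hat X n A) :
    Hat X n B := by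
  cases n with
  | zero => exact hX.iso_closed e h
  | succ n =>
    obtain ⟨K, E, f, g, hfg, hE, hK⟩ := h
    have := hfg.mono_s5
    have := hfg.epi_s5
    refine ⟨K, E, f, g ≫ e.hom, isSES_mk ?_ fun k hk => hfg.exists_lift_s5 k ?_, hE, hK⟩
    · rw [reassoc_of% hfg.comp_eq_zero, zero_comp]
    · rwa [← Category.assoc, Preadditive.IsIso.comp_right_eq_zero] at hk

lemma Hat.biprod_right (hX : IsSubcat X) {n : ℕ} {A B : C} (hA : Hat X n A) (hB : X B) :
    Hat X n (A ⊞ B) := by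
  cases n with
  | zero => exact hX.biprod_closed hA hB
  | succ n =>
    obtain ⟨K, E, f, g, hfg, hE, hK⟩ := hA
    have := hfg.mono_s5
    have := hfg.epi_s5
    refine ⟨K, E ⊞ B, f ≫ biprod.inl, biprod.map g (𝟙 B), isSES_mk ?_ fun k hk => ?_,
      hX.biprod_closed hE hB, hK⟩
    · simp [reassoc_of% hfg.comp_eq_zero]
    · have h₁ := hk =≫ biprod.fst
      have h₂ := hk =≫ biprod.snd
      simp only [Category.assoc, biprod.map_fst, biprod.map_snd, zero_comp,
        Category.comp_id] at h₁ h₂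
      obtain ⟨l, hl⟩ := hfg.exists_lift_s5 (k ≫ biprod.fst) (by simpa using h₁)
      exact ⟨l, by ext <;> simp [reassoc_of% hl, h₂]⟩

/-- Each `X̂ₙ` is closed under kernels of epimorphisms onto objects of `X`. -/
lemma Hat.ker (hX : KerEpiClosed X) {n : ℕ} {A B D : C} {f : A ⟶ B} {g : B ⟶ D}
    (h : IsSES f g) (hB : Hat X n B) (hD : X D) : Hat X n A := by
  cases n with
  | zero => exact hX f g h hB hD
  | succ n =>
    obtain ⟨K, E, k, e, hke, hE, hK⟩ := hB
    obtain ⟨P, a, b, c, d, hab, hcd⟩ := hke.exists_ker_comp h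
    exact ⟨K, P, a, b, hab, hX c d hcd hE hD, hK⟩

lemma HatAll.exists_ses (hX : IsSubcat X) {M : C} (hM : HatAll X M) :
    ∃ (K E : C) (f : K ⟶ E) (g : E ⟶ M), IsSES f g ∧ X E ∧ HatAll X K := by
  obtain ⟨n, hn⟩ := hM
  cases n with
  | zero =>
    exact ⟨0, M, 0, 𝟙 M, isSES_mk (by simp) fun k hk => ⟨0, by simpa using hk.symm⟩, hn,
      0, hX.zero⟩
  | succ n =>
    obtain ⟨K, E, f, g, hfg, hE, hK⟩ := hn
    exact ⟨K, E, f, g, hfg, hE, n, hK⟩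

lemma IsThickSub.of_hat {T : C → Prop} (hT : IsThickSub T) (hXT : ∀ N, X N → T N) {n : ℕ}
    {M : C} (hM : Hat X n M) : T M := by
  induction n generalizing M with
  | zero => exact hXT M hM
  | succ n ih =>
    obtain ⟨K, E, f, g, hfg, hE, hK⟩ := hM
    exact (hT.2 f g hfg).1 (ih hK) (hXT E hE)

end

section

variable {C : Type u} [Category.{v} C] [Abelian C] [HasExt.{w} C] {X W : C → Prop}

/-- Every object of `X̂ₙ` embeds into an object `H` of `X̂ₙ ∩ X^⊥` with cokernel in `X`. -/
lemma LeftFrobenius.exists_hull (hF : LeftFrobenius X W) {n : ℕ} {A : C} (hA : Hat X n A) :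
    ∃ (H X' : C) (f : A ⟶ H) (g : H ⟶ X'), IsSES f g ∧ Hat X n H ∧ rightPerp X H ∧ X X' := by
  induction n generalizing A with
  | zero =>
    obtain ⟨W₀, X', f, g, hfg, hW, hX'⟩ := hF.cogen.2 A hA
    exact ⟨W₀, X', f, g, hfg, hF.cogen.1 _ hW, hF.perp _ hW, hX'⟩
  | succ n ih =>
    obtain ⟨K, E, k, e, hke, hE, hK⟩ := hA
    obtain ⟨H, X₁, i, j, hij, hH, hH', hX₁⟩ := ih hK
    -- Push out `E` along `K ⟶ H`, then embed the resulting object `P` of `X` into `W`.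
    obtain ⟨P, a, b, c, d, hab, hcd⟩ := hke.exists_pushout hij
    obtain ⟨W₀, X₂, s, t, hst, hW, hX₂⟩ := hF.cogen.2 P (hF.extClosed c d hcd hE hX₁)
    obtain ⟨Q, u, v, p, q, huv, hpq⟩ := hst.exists_coker_comp hab
    exact ⟨Q, X₂, p, q, hpq, ⟨H, W₀, u, v, huv, hF.cogen.1 _ hW, hH⟩,
      huv.rightPerp_coker hH' (hF.perp _ hW), hX₂⟩

/-- An extension of an object of `X` by an object of `X̂ₙ` lies in `X̂ₙ`: pushing out along a
hull `A ⟶ H` splits it, so `B` is the kernel of an epimorphism from `H ⊞ D` onto an object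
of `X`. -/
lemma LeftFrobenius.hat_ext (hF : LeftFrobenius X W) {n : ℕ} {A B D : C} {f : A ⟶ B}
    {g : B ⟶ D} (h : IsSES f g) (hA : Hat X n A) (hD : X D) : Hat X n B := by
  obtain ⟨H, X', i, j, hij, hH, hH', hX'⟩ := hF.exists_hull hA
  obtain ⟨P, a, b, c, d, hab, hcd⟩ := h.exists_pushout hij
  obtain ⟨e⟩ := hab.nonempty_iso_biprod (hH' D hD 1 le_rfl)
  exact Hat.ker hF.kerEpiClosed hcd ((hH.biprod_right hF.subX hD).of_iso hF.subX e) hX'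

lemma LeftFrobenius.hat_summand (hF : LeftFrobenius X W) {n : ℕ} {A M : C} (i : A ⟶ M)
    (p : M ⟶ A) (hip : i ≫ p = 𝟙 A) (hM : Hat X n M) : Hat X n A := by
  induction n generalizing A M with
  | zero => exact hF.subX.summand_closed i p hip hM
  | succ n ih =>
    obtain ⟨K, E, f, g, hfg, hE, hK⟩ := hM
    have := hfg.epi_s5
    have hp : Epi p := epi_of_epi_fac hip
    -- With `e = p ≫ i` the idempotent on `M` with image `A`, the map `(x, y) ↦ e x + (1 - e) y`
    -- from `E ⊞ E` to `M` is an epimorphism whose kernel contains `ker (E ⟶ A)` as a summand.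
    let q : E ⊞ E ⟶ M := biprod.desc (g ≫ p ≫ i) (g ≫ (𝟙 M - p ≫ i))
    have hq : Epi q := epi_of_epi_fac (f := biprod.lift (𝟙 E) (𝟙 E)) (h := g) (by simp [q])
    have hker : ∀ {Y Z : C} (r : Y ⟶ Z) [Epi r], IsSES (kernel.ι r) r := fun r _ =>
      isSES_mk (kernel.condition r) fun k hk => ⟨kernel.lift r k hk, kernel.lift_ι _ _ _⟩
    have hL : Hat X n (kernel q) :=
      Hat.ker hF.kerEpiClosed (hker q).pullback_fst
        (hF.hat_ext (hfg.pullback_snd q) hK (hF.subX.biprod_closed hE hE)) hE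
    have hqp : q ≫ p = biprod.fst ≫ g ≫ p := by
      ext <;> simp [q, hip]
    refine ⟨kernel (g ≫ p), E, _, _, hker (g ≫ p), hE,
      ih (kernel.lift q (kernel.ι (g ≫ p) ≫ biprod.inl) ?_)
        (kernel.lift (g ≫ p) (kernel.ι q ≫ biprod.fst) ?_) ?_ hL⟩
    · have := kernel.condition (g ≫ p) =≫ i
      rw [Category.assoc, biprod.inl_desc]
      simpa only [Category.assoc, zero_comp] using this
    · rw [Category.assoc, ← hqp, kernel.condition_assoc, zero_comp]
    · ext
      simp

/-! ### Two out of three for `X̂` -/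

/-- `X̂` is closed under extensions. If `K ⟶ E ⟶ D` starts a resolution of `D`, then `B` is the
cokernel of a monomorphism from `K` to the pullback `P`, an extension of `E ∈ X` by `A`; covering
`P` by an object of `X` presents `B` through an extension of `K`, which has a shorter
resolution than `D`. -/
lemma LeftFrobenius.hatAll_ext (hF : LeftFrobenius X W) {n : ℕ} {A B D : C} {f : A ⟶ B}
    {g : B ⟶ D} (h : IsSES f g) (hA : HatAll X A) (hD : Hat X n D) : HatAll X B := by
  induction n generalizing A B D with
  | zero =>
    obtain ⟨m, hm⟩ := hA
    exact ⟨m, hF.hat_ext h hm hD⟩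
  | succ n ih =>
    obtain ⟨K, E, k, e, hke, hE, hK⟩ := hD
    obtain ⟨P, a, b, c, d, hab, hcd⟩ := hke.exists_pullback h
    obtain ⟨m, hm⟩ := hA
    have hP : HatAll X P := ⟨m, hF.hat_ext hcd hm hE⟩
    obtain ⟨K', E', k', e', hke', hE', hK'⟩ := hP.exists_ses hF.subX
    obtain ⟨Q, s, t, u, v, hst, huv⟩ := hke'.exists_ker_comp hab
    obtain ⟨l, hl⟩ := ih hst hK' hK
    exact ⟨l + 1, Q, E', u, v, huv, hE', hl⟩

lemma LeftFrobenius.hatAll_coker (hF : LeftFrobenius X W) {A B D : C} {f : A ⟶ B}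
    {g : B ⟶ D} (h : IsSES f g) (hA : HatAll X A) (hB : HatAll X B) : HatAll X D := by
  obtain ⟨K, E, k, e, hke, hE, hK⟩ := hB.exists_ses hF.subX
  obtain ⟨P, s, t, u, v, hst, huv⟩ := hke.exists_ker_comp h
  obtain ⟨n, hn⟩ := hA
  obtain ⟨l, hl⟩ := hF.hatAll_ext hst hK hn
  exact ⟨l + 1, P, E, u, v, huv, hE, hl⟩

/-- `X̂` is closed under kernels of epimorphisms: pulling back along an epimorphism from an object
of `X` onto `D` reduces to the case `D ∈ X`. -/
lemma LeftFrobenius.hatAll_ker (hF : LeftFrobenius X W) {A B D : C} {f : A ⟶ B}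
    {g : B ⟶ D} (h : IsSES f g) (hB : HatAll X B) (hD : HatAll X D) : HatAll X A := by
  obtain ⟨K, E, k, e, hke, hE, hK⟩ := hD.exists_ses hF.subX
  obtain ⟨P, a, b, c, d, hab, hcd⟩ := hke.exists_pullback h
  obtain ⟨n, hn⟩ := hB
  obtain ⟨m, hm⟩ := hF.hatAll_ext hab hK hn
  exact ⟨m, hm.ker hF.kerEpiClosed hcd hE⟩

lemma LeftFrobenius.isThickSub_hatAll (hF : LeftFrobenius X W) : IsThickSub (HatAll X) where
  left :=
    { zero := ⟨0, hF.subX.zero⟩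
      iso_closed := fun e ⟨n, hn⟩ => ⟨n, hn.of_iso hF.subX e⟩
      biprod_closed := fun {A B} hA ⟨n, hn⟩ =>
        hF.hatAll_ext (f := (biprod.inl : A ⟶ A ⊞ B)) (g := biprod.snd)
          (isSES_mk (by simp) fun k hk => ⟨k ≫ biprod.fst, by ext <;> simp [hk]⟩) hA hn
      summand_closed := fun i p hip ⟨n, hn⟩ => ⟨n, hF.hat_summand i p hip hn⟩ }
  right _ _ _ _ _ h :=
    ⟨hF.hatAll_coker h, fun hA ⟨_, hn⟩ => hF.hatAll_ext h hA hn, hF.hatAll_ker h⟩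

end

/-- For a left Frobenius pair `(X, W)`, the class `X̂` is a thick subcategory
of `C` and coincides with `Thick(X)`, the smallest thick subcategory containing `X`. -/
theorem statement5 {C : Type u} [Category.{v} C] [Abelian C]
    [EnoughProjectives C] [EnoughInjectives C] [HasExt.{w} C]
    (X W : C → Prop) (hF : LeftFrobenius X W) :
    IsThickSub (HatAll X) ∧ (∀ M, X M → HatAll X M) ∧
      (∀ M, thickClosure X M ↔ HatAll X M) := by
  exact ⟨hF.isThickSub_hatAll, fun M hM => ⟨0, hM⟩, fun M =>
    ⟨fun h => h _ hF.isThickSub_hatAll fun N hN => ⟨0, hN⟩,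
      fun ⟨_, hn⟩ _ hT hXT => hT.of_hat hXT hn⟩⟩

end FrobeniusPaper
end

section
/- The assignments (X, W) ↦ (X, Ŵ) and (U, V) ↦ (U, U ∩ V) are mutually inverse: if (U, V) is a cotorsion pair on Thick(U) with V ⊆ U^⊥, then the hull of U ∩ V satisfies (U ∩ V)^ = V; and if (X, W) is a left Frobenius pair, then X ∩ Ŵ = W. -/
/-!
Two devices carry the proof. First, a short exact sequence `0 → A → B → D → 0` with
`Ext¹(D, A) = 0` splits, so `A` and `D` are direct summands of `B`. Second, dimension shifting
shows that `X^⊥` contains `Ŵ` whenever it contains `W`.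

*Frobenius pairs.* If `M ∈ X ∩ Ŵ`, the cogenerator sequence `0 → M → W₀ → X' → 0` splits because
`Ŵ ⊆ X^⊥`, so `M` is a summand of `W₀ ∈ W`.

*Cotorsion pairs.* The splitting device gives `V = {M ∈ Thick(U) | Ext¹(U, M) = 0}` and
`U = {M ∈ Thick(U) | Ext¹(M, V) = 0}`. The first identity yields `(U ∩ V)^ ⊆ V`, and also that
`V` is closed under extensions in `Thick(U)`. For `V ⊆ (U ∩ V)^`, the point is to bound the length
of the resolution. The objects `M` for which `Extⁱ(M, V) = 0` for all large `i`, uniformly in the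
objects of `V`, form a thick subcategory; it contains `U` since `V ⊆ U^⊥`, hence it contains
`Thick(U)`. One then inducts on the bound for `M ∈ V`: in an approximation `0 → V₀ → U₀ → M → 0`
the term `U₀` is an extension of objects of `V`, hence lies in `U ∩ V`, and the bound for `V₀` is
one less than that for `M`; when the bound is `0`, `M` itself lies in `U`.
-/

open CategoryTheory CategoryTheory.Limits CategoryTheory.Abelian ZeroObject

universe w v u

namespace FrobeniusPaper

variable {C : Type u} [Category.{v} C] [Abelian C]

variable [HasExt.{w} C]

/-! ### Vanishing of Ext along short exact sequences -/

lemma IsSES.subsingleton_snd_mid {A B D : C} {f : A ⟶ B} {g : B ⟶ D} (h : IsSES f g)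
    (X : C) (i : ℕ) (hA : Subsingleton (Ext X A i)) (hD : Subsingleton (Ext X D i)) :
    Subsingleton (Ext X B i) := by
  obtain ⟨w, hS⟩ := h
  refine subsingleton_of_forall_eq 0 fun x => ?_
  obtain ⟨y, rfl⟩ := Ext.covariant_sequence_exact₂ X hS x (hD.elim _ _)
  rw [hA.elim y 0, Ext.zero_comp]

lemma IsSES.subsingleton_snd_right {A B D : C} {f : A ⟶ B} {g : B ⟶ D} (h : IsSES f g)
    (X : C) (i : ℕ) (hB : Subsingleton (Ext X B i)) (hA : Subsingleton (Ext X A (i + 1))) :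
    Subsingleton (Ext X D i) := by
  obtain ⟨w, hS⟩ := h
  refine subsingleton_of_forall_eq 0 fun x => ?_
  obtain ⟨y, rfl⟩ := Ext.covariant_sequence_exact₃ X hS x rfl (hA.elim _ _)
  rw [hB.elim y 0, Ext.zero_comp]

lemma IsSES.subsingleton_fst_mid {A B D : C} {f : A ⟶ B} {g : B ⟶ D} (h : IsSES f g)
    (Y : C) (i : ℕ) (hA : Subsingleton (Ext A Y i)) (hD : Subsingleton (Ext D Y i)) :
    Subsingleton (Ext B Y i) := by
  obtain ⟨w, hS⟩ := h
  refine subsingleton_of_forall_eq 0 fun x => ?_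
  obtain ⟨y, rfl⟩ := Ext.contravariant_sequence_exact₂ hS Y x (hA.elim _ _)
  rw [hD.elim y 0, Ext.comp_zero]

lemma IsSES.subsingleton_fst_left {A B D : C} {f : A ⟶ B} {g : B ⟶ D} (h : IsSES f g)
    (Y : C) (i : ℕ) (hB : Subsingleton (Ext B Y i)) (hD : Subsingleton (Ext D Y (i + 1))) :
    Subsingleton (Ext A Y i) := by
  obtain ⟨w, hS⟩ := h
  refine subsingleton_of_forall_eq 0 fun x => ?_
  obtain ⟨y, rfl⟩ := Ext.contravariant_sequence_exact₁ hS Y x (add_comm 1 i) (hD.elim _ _)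
  rw [hB.elim y 0, Ext.comp_zero]

lemma IsSES.subsingleton_fst_right {A B D : C} {f : A ⟶ B} {g : B ⟶ D} (h : IsSES f g)
    (Y : C) (i : ℕ) (hA : Subsingleton (Ext A Y i)) (hB : Subsingleton (Ext B Y (i + 1))) :
    Subsingleton (Ext D Y (i + 1)) := by
  obtain ⟨w, hS⟩ := h
  refine subsingleton_of_forall_eq 0 fun x => ?_
  obtain ⟨y, rfl⟩ := Ext.contravariant_sequence_exact₃ hS Y x (hB.elim _ _) (add_comm 1 i)
  rw [hA.elim y 0, Ext.comp_zero]

lemma subsingleton_fst_of_retract {A M : C} (r : A ⟶ M) (p : M ⟶ A) (hrp : r ≫ p = 𝟙 A)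
    (Y : C) (i : ℕ) (hM : Subsingleton (Ext M Y i)) : Subsingleton (Ext A Y i) := by
  refine subsingleton_of_forall_eq 0 fun x => ?_
  rw [← Ext.mk₀_id_comp x, ← hrp, ← Ext.mk₀_comp_mk₀_assoc,
    hM.elim ((Ext.mk₀ p).comp x (zero_add i)) 0, Ext.comp_zero]

/-! ### Splitting -/

lemma IsSES.exists_retraction {A B D : C} {f : A ⟶ B} {g : B ⟶ D} (h : IsSES f g)
    (hDA : Subsingleton (Ext D A 1)) : ∃ p : B ⟶ A, f ≫ p = 𝟙 A := by
  obtain ⟨w, hS⟩ := h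
  obtain ⟨y, hy⟩ := Ext.contravariant_sequence_exact₁ hS A (Ext.mk₀ (𝟙 A)) (add_zero 1)
    (hDA.elim _ _)
  obtain ⟨p, rfl⟩ := (Ext.mk₀_bijective _ _).2 y
  exact ⟨p, (Ext.mk₀_bijective _ _).1 (by rw [← hy, Ext.mk₀_comp_mk₀])⟩

lemma IsSES.exists_section {A B D : C} {f : A ⟶ B} {g : B ⟶ D} (h : IsSES f g)
    (hDA : Subsingleton (Ext D A 1)) : ∃ s : D ⟶ B, s ≫ g = 𝟙 D := by
  obtain ⟨w, hS⟩ := h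
  obtain ⟨y, hy⟩ := Ext.covariant_sequence_exact₃ D hS (Ext.mk₀ (𝟙 D)) (zero_add 1)
    (hDA.elim _ _)
  obtain ⟨s, rfl⟩ := (Ext.mk₀_bijective _ _).2 y
  exact ⟨s, (Ext.mk₀_bijective _ _).1 (by rw [← hy, Ext.mk₀_comp_mk₀])⟩

/-! ### Hulls -/

/-- Dimension shifting: `W ⊆ X^⊥` implies `Ŵ ⊆ X^⊥`. -/
lemma rightPerp_of_hat_s9 {X W : C → Prop} (hW : ∀ M, W M → rightPerp X M) :
    ∀ (n : ℕ) (M : C), Hat W n M → rightPerp X M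
  | 0, M, h => hW M h
  | n + 1, _, ⟨K, E, _, _, hs, hE, hK⟩ => fun N hN i hi =>
    hs.subsingleton_snd_right N i (hW E hE N hN i hi)
      (rightPerp_of_hat_s9 hW n K hK N hN (i + 1) (by lia))

lemma thickClosure_of_hat {U W : C → Prop} (hW : ∀ M, W M → U M) :
    ∀ (n : ℕ) (M : C), Hat W n M → thickClosure U M
  | 0, M, h => fun _ _ hU => hU M (hW M h)
  | n + 1, _, ⟨K, E, f, g, hs, hE, hK⟩ => fun T hT hU =>
    (hT.2 f g hs).1 (thickClosure_of_hat hW n K hK T hT hU) (hU E (hW E hE))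

/-! ### Relative projective dimension -/

/-- `M` has projective dimension at most `n` relative to `V`: `Extⁱ(M, N) = 0` for all `i > n` and
all `N ∈ V`. -/
def ProjDimLE (V : C → Prop) (n : ℕ) (M : C) : Prop :=
  ∀ N, V N → ∀ i : ℕ, n < i → Subsingleton (Ext M N i)

lemma ProjDimLE.of_retract {V : C → Prop} {n : ℕ} {A M : C} (hM : ProjDimLE V n M)
    (r : A ⟶ M) (p : M ⟶ A) (hrp : r ≫ p = 𝟙 A) : ProjDimLE V n A :=
  fun N hN i hi => subsingleton_fst_of_retract r p hrp N i (hM N hN i hi)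

lemma isThickSub_finite_projDim (V : C → Prop) : IsThickSub fun M : C => ∃ n, ProjDimLE V n M := by
  refine ⟨⟨⟨0, fun N _ i _ => ?_⟩, ?_, ?_, ?_⟩, ?_⟩
  · refine subsingleton_of_forall_eq 0 fun x => ?_
    rw [← Ext.mk₀_id_comp x, (isZero_zero C).eq_of_src (𝟙 0) 0, Ext.mk₀_zero, Ext.zero_comp]
  · rintro A B e ⟨n, hn⟩
    exact ⟨n, hn.of_retract e.inv e.hom e.inv_hom_id⟩
  · rintro A B ⟨n, hn⟩ ⟨m, hm⟩
    refine ⟨max n m, fun N hN i hi => ⟨fun x y => Ext.biprod_ext ?_ ?_⟩⟩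
    · exact (hn N hN i (by lia)).elim _ _
    · exact (hm N hN i (by lia)).elim _ _
  · rintro A M r p hrp ⟨n, hn⟩
    exact ⟨n, hn.of_retract r p hrp⟩
  · refine fun A B D f g hs => ⟨?_, ?_, ?_⟩
    · rintro ⟨n, hn⟩ ⟨m, hm⟩
      refine ⟨max n m + 1, fun N hN i hi => ?_⟩
      obtain ⟨j, rfl⟩ : ∃ j, i = j + 1 := ⟨i - 1, by lia⟩
      exact hs.subsingleton_fst_right N j (hn N hN j (by lia)) (hm N hN (j + 1) (by lia))
    · rintro ⟨n, hn⟩ ⟨m, hm⟩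
      exact ⟨max n m, fun N hN i hi =>
        hs.subsingleton_fst_mid N i (hn N hN i (by lia)) (hm N hN i (by lia))⟩
    · rintro ⟨n, hn⟩ ⟨m, hm⟩
      exact ⟨max n m, fun N hN i hi =>
        hs.subsingleton_fst_left N i (hn N hN i (by lia)) (hm N hN (i + 1) (by lia))⟩

/-! ### Cotorsion pairs -/

/-- The right class of a cotorsion pair on `B` contains `U^{⊥₁} ∩ B`. -/
lemma CotorsionPairOn.mem_right {B U V : C → Prop} (h : CotorsionPairOn B U V) {M : C} (hM : B M)
    (hU : ∀ N, U N → Subsingleton (Ext N M 1)) : V M := by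
  obtain ⟨V₀, U₀, f, g, hs, hU₀, hV₀⟩ := h.cores M hM
  obtain ⟨p, hp⟩ := hs.exists_retraction (hU U₀ hU₀)
  exact h.summandV f p hp hV₀

/-- The left class of a cotorsion pair on `B` contains `^{⊥₁}V ∩ B`. -/
lemma CotorsionPairOn.mem_left {B U V : C → Prop} (h : CotorsionPairOn B U V) {M : C} (hM : B M)
    (hV : ∀ N, V N → Subsingleton (Ext M N 1)) : U M := by
  obtain ⟨V₀, U₀, f, g, hs, hU₀, hV₀⟩ := h.res M hM
  obtain ⟨s, hs'⟩ := hs.exists_section (hV V₀ hV₀)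
  exact h.summandU s g hs' hU₀

/-- An object of `V` of relative projective dimension at most `n` has a `U ∩ V`-resolution of
length `n`, built from the approximations `0 → V₀ → U₀ → M → 0`. -/
lemma CotorsionPairOn.hat_of_projDimLE {B U V : C → Prop} (h : CotorsionPairOn B U V)
    (hUV : ∀ N, V N → rightPerp U N) :
    ∀ (n : ℕ) (M : C), V M → ProjDimLE V n M → Hat (fun A => U A ∧ V A) n M
  | 0, M, hM, hd => ⟨h.mem_left (h.subV M hM) fun N hN => hd N hN 1 one_pos, hM⟩
  | n + 1, M, hM, hd => by
    obtain ⟨V₀, U₀, f, g, hs, hU₀, hV₀⟩ := h.res M (h.subV M hM)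
    refine ⟨V₀, U₀, f, g, hs, ⟨hU₀, ?_⟩, hat_of_projDimLE h hUV n V₀ hV₀ fun N hN i hi => ?_⟩
    · exact h.mem_right (h.subU U₀ hU₀) fun N hN =>
        hs.subsingleton_snd_mid N 1 (h.ext1 N V₀ hN hV₀) (h.ext1 N M hN hM)
    · exact hs.subsingleton_fst_left N i (hUV N hN U₀ hU₀ i (by lia)) (hd N hN (i + 1) (by lia))

/-- The assignments `(X, W) ↦ (X, Ŵ)` and `(U, V) ↦ (U, U ∩ V)` are mutually
inverse: `(U ∩ V)^ = V` for a cotorsion pair `(U, V)` on `Thick(U)` with `V ⊆ U^⊥`, and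
`X ∩ Ŵ = W` for a left Frobenius pair `(X, W)`. -/
theorem statement9 {C : Type u} [Category.{v} C] [Abelian C]
    [EnoughProjectives C] [EnoughInjectives C] [HasExt.{w} C] :
    (∀ U V : C → Prop, CotorsionPairOn (thickClosure U) U V →
      (∀ N, V N → rightPerp U N) →
      ∀ M, HatAll (fun A => U A ∧ V A) M ↔ V M) ∧
    (∀ X W : C → Prop, LeftFrobenius X W →
      ∀ M, (X M ∧ HatAll W M) ↔ W M) := by
  refine ⟨fun U V h hUV M => ⟨?_, fun hM => ?_⟩, fun X W h M => ⟨?_, fun hM => ?_⟩⟩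
  · rintro ⟨n, hn⟩
    exact h.mem_right (thickClosure_of_hat (fun _ hA => hA.1) n M hn) fun N hN =>
      rightPerp_of_hat_s9 (fun A hA => hUV A hA.2) n M hn N hN 1 le_rfl
  · -- Objects of `U` have relative projective dimension `0`, so those of `Thick(U)` have a finite one.
    obtain ⟨n, hn⟩ := h.subV M hM _ (isThickSub_finite_projDim V)
      fun N hN => ⟨0, fun Y hY i hi => hUV Y hY N hN i hi⟩
    exact ⟨n, h.hat_of_projDimLE hUV n M hM hn⟩
  · rintro ⟨hX, n, hn⟩
    obtain ⟨W₀, X', f, g, hs, hW₀, hX'⟩ := h.cogen.2 M hX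
    obtain ⟨p, hp⟩ := hs.exists_retraction (rightPerp_of_hat_s9 h.perp n M hn X' hX' 1 le_rfl)
    exact h.subW.summand_closed f p hp hW₀
  · exact ⟨h.cogen.1 M hM, 0, hM⟩

end FrobeniusPaper
end
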